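/- arXiv:1902.07137 — 2 statements merged into one kernel-verified Lean document; each statement's English description precedes it below -/
import Mathlib

section
/- (Recovery of one Gaussian component.) Fix means μ_1,…,μ_K ∈ ℝ^d, standard deviations σ_1,…,σ_K > 0, weights w_1,…,w_K > 0 summing to 1, θ > 0, ε with 0 < ε < F(θ,d)·w_m, and m ∈ {1,…,K}. For each n, let a_1,…,a_n be i.i.d. samples from the mixture Σ_{k=1}^K w_k·N(μ_k, σ_k²·I_d), let V_m = {i : ‖a_i − μ_m‖ ≤ θσ_m}, let λ = λ(n) satisfy λ ≥ 2θσ_m/((F(θ,d)·w_m − ε)·n), and let x* = (x_1*,…,x_n*) be the minimizer of the sum-of-norms clustering objective with parameter λ. Then there exist constants c > 0 and C such that for every n, with probability at least 1 − C·e^{−c·n}, all indices in V_m lie in the same cluster, i.e., x_i* = x_{i′}* for all i, i′ ∈ V_m. -/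
open MeasureTheory ProbabilityTheory Finset

/-- The sum-of-norms clustering objective. -/
noncomputable def sonObjective {d n : ℕ} (a : Fin n → EuclideanSpace ℝ (Fin d)) (lam : ℝ)
    (x : Fin n → EuclideanSpace ℝ (Fin d)) : ℝ :=
  (1 / 2) * ∑ i, ‖x i - a i‖ ^ 2 + lam * ∑ i, ∑ j, if i < j then ‖x i - x j‖ else 0

/-- The spherical Gaussian `N(μ, σ²·I_d)` on `ℝ^d`. -/
noncomputable def sphericalGaussian (d : ℕ) (μ : EuclideanSpace ℝ (Fin d)) (σ : ℝ) :
    Measure (EuclideanSpace ℝ (Fin d)) :=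
  (Measure.pi fun i : Fin d => gaussianReal (μ i) (Real.toNNReal (σ ^ 2))).map
    (MeasurableEquiv.toLp 2 (Fin d → ℝ))

/-- The mixture of Gaussians `Σ_m w_m · N(μ_m, σ_m²·I_d)`. -/
noncomputable def gaussianMixture (d K : ℕ) (μ : Fin K → EuclideanSpace ℝ (Fin d))
    (σ : Fin K → ℝ) (w : Fin K → ℝ) : Measure (EuclideanSpace ℝ (Fin d)) :=
  ∑ m, ENNReal.ofReal (w m) • sphericalGaussian d (μ m) (σ m)

/-- The chi-squared distribution with `d` degrees of freedom. -/
noncomputable def chiSquaredMeasure (d : ℕ) : Measure ℝ :=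
  (Measure.pi fun _ : Fin d => gaussianReal 0 1).map (fun y => ∑ i, (y i) ^ 2)

/-- `F(θ, d)`: the probability that a chi-squared random variable with `d` degrees of
freedom is at most `θ²`. -/
noncomputable def chiSquaredCDF (θ : ℝ) (d : ℕ) : ℝ :=
  (chiSquaredMeasure d (Set.Iic (θ ^ 2))).toReal

lemma half_sum_lt {n : ℕ} (g : Fin n → Fin n → ℝ) (hs : ∀ i j, g i j = g j i)
    (h0 : ∀ i, g i i = 0) :
    (∑ i, ∑ j, if i < j then g i j else 0) = (1 / 2) * ∑ i, ∑ j, g i j := by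
  have h1 : ∑ i, ∑ j, g i j = (∑ i, ∑ j, if i < j then g i j else 0) +
      ∑ i, ∑ j, if j < i then g i j else 0 := by
    rw [← Finset.sum_add_distrib]
    refine Finset.sum_congr rfl fun i _ => ?_
    rw [← Finset.sum_add_distrib]
    refine Finset.sum_congr rfl fun j _ => ?_
    rcases lt_trichotomy i j with h | h | h
    · simp [h, h.not_gt]
    · subst h; simp [h0]
    · simp [h, h.not_gt]
  have h2 : (∑ i, ∑ j, if j < i then g i j else 0) = ∑ i, ∑ j, if i < j then g i j else 0 := by
    rw [Finset.sum_comm]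
    refine Finset.sum_congr rfl fun i _ => Finset.sum_congr rfl fun j _ => ?_
    rw [hs j i]
  rw [h1, h2]; ring

lemma sum_split {n : ℕ} (V : Finset (Fin n)) (g : Fin n → Fin n → ℝ)
    (hs : ∀ i j, g i j = g j i) :
    ∑ i, ∑ j, g i j = ∑ i ∈ V, ∑ j ∈ V, g i j + 2 * ∑ j ∈ Vᶜ, ∑ i ∈ V, g i j
      + ∑ i ∈ Vᶜ, ∑ j ∈ Vᶜ, g i j := by
  have h : ∀ i, ∑ j, g i j = ∑ j ∈ V, g i j + ∑ j ∈ Vᶜ, g i j := fun i =>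
    (Finset.sum_add_sum_compl V _).symm
  rw [← Finset.sum_add_sum_compl V]
  simp_rw [h, Finset.sum_add_distrib]
  have h3 : ∑ i ∈ V, ∑ j ∈ Vᶜ, g i j = ∑ j ∈ Vᶜ, ∑ i ∈ V, g i j := Finset.sum_comm
  have h4 : ∑ i ∈ Vᶜ, ∑ j ∈ V, g i j = ∑ j ∈ Vᶜ, ∑ i ∈ V, g i j := by
    refine Finset.sum_congr rfl fun i _ => Finset.sum_congr rfl fun j _ => hs _ _
  rw [h3, h4]; ring

lemma quad_identity {ι E : Type*} [NormedAddCommGroup E] [InnerProductSpace ℝ E]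
    (V : Finset ι) (x a : ι → E) (c : E) (hc : (V.card : ℝ) • c = ∑ i ∈ V, x i) :
    (V.card : ℝ) * (∑ i ∈ V, ‖x i - a i‖ ^ 2 - ∑ i ∈ V, ‖c - a i‖ ^ 2 - ∑ i ∈ V, ‖x i - c‖ ^ 2)
      = - ∑ i ∈ V, ∑ j ∈ V, inner ℝ (x i - x j) (a i - a j) := by
  have hR : ∑ i ∈ V, ∑ j ∈ V, inner ℝ (x i - x j) (a i - a j)
      = 2 * V.card * ∑ i ∈ V, inner ℝ (x i) (a i) - 2 * inner ℝ (∑ i ∈ V, x i) (∑ i ∈ V, a i) := by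
    simp only [inner_sub_left, inner_sub_right, Finset.sum_sub_distrib, Finset.sum_const,
      nsmul_eq_mul, ← inner_sum, ← sum_inner, ← Finset.mul_sum]
    ring
  have hL : ∑ i ∈ V, ‖x i - a i‖ ^ 2 - ∑ i ∈ V, ‖c - a i‖ ^ 2 - ∑ i ∈ V, ‖x i - c‖ ^ 2
      = -2 * ∑ i ∈ V, inner ℝ (x i) (a i) + 2 * inner ℝ c (∑ i ∈ V, a i)
        + 2 * inner ℝ (∑ i ∈ V, x i) c - 2 * V.card * inner ℝ c c := by
    simp only [norm_sub_sq_real, Finset.sum_sub_distrib, Finset.sum_add_distrib, Finset.sum_const,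
      nsmul_eq_mul, ← inner_sum, ← sum_inner, ← Finset.mul_sum, real_inner_self_eq_norm_sq]
    ring
  rw [hR, hL, ← hc]
  simp only [inner_smul_left, inner_smul_right]
  simp
  ring

lemma det_recovery {d n : ℕ} (a x : Fin n → EuclideanSpace ℝ (Fin d)) (lam : ℝ) (hl : 0 ≤ lam)
    (V : Finset (Fin n)) (D : ℝ) (hD : ∀ i ∈ V, ∀ j ∈ V, ‖a i - a j‖ ≤ D)
    (hlam : D ≤ lam * V.card)
    (hx : ∀ y, sonObjective a lam x ≤ sonObjective a lam y) :
    ∀ i ∈ V, ∀ j ∈ V, x i = x j := by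
  intro i hi j hj
  have hN : (0 : ℝ) < V.card := by exact_mod_cast Finset.card_pos.mpr ⟨i, hi⟩
  set c : EuclideanSpace ℝ (Fin d) := (V.card : ℝ)⁻¹ • ∑ i ∈ V, x i with hcdef
  have hc : (V.card : ℝ) • c = ∑ i ∈ V, x i := by
    rw [hcdef, smul_smul, mul_inv_cancel₀ hN.ne', one_smul]
  let y : Fin n → EuclideanSpace ℝ (Fin d) := fun i => if i ∈ V then c else x i
  have hyV : ∀ i ∈ V, y i = c := fun i hi => by simp [y, hi]
  have hyC : ∀ i ∈ Vᶜ, y i = x i := fun i hi => by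
    simp only [y]; rw [if_neg (Finset.mem_compl.mp hi)]
  have key := hx y
  unfold sonObjective at key
  rw [half_sum_lt (fun i j => ‖x i - x j‖) (fun i j => norm_sub_rev _ _) (by simp),
    half_sum_lt (fun i j => ‖y i - y j‖) (fun i j => norm_sub_rev _ _) (by simp),
    sum_split V (fun i j => ‖x i - x j‖) (fun i j => norm_sub_rev _ _),
    sum_split V (fun i j => ‖y i - y j‖) (fun i j => norm_sub_rev _ _),
    ← Finset.sum_add_sum_compl V (fun i => ‖x i - a i‖ ^ 2),
    ← Finset.sum_add_sum_compl V (fun i => ‖y i - a i‖ ^ 2)] at key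
  have e1 : ∑ i ∈ V, ‖y i - a i‖ ^ 2 = ∑ i ∈ V, ‖c - a i‖ ^ 2 :=
    Finset.sum_congr rfl fun i hi => by rw [hyV i hi]
  have e2 : ∑ i ∈ Vᶜ, ‖y i - a i‖ ^ 2 = ∑ i ∈ Vᶜ, ‖x i - a i‖ ^ 2 :=
    Finset.sum_congr rfl fun i hi => by rw [hyC i hi]
  have e3 : ∑ i ∈ V, ∑ j ∈ V, ‖y i - y j‖ = 0 :=
    Finset.sum_eq_zero fun i hi => Finset.sum_eq_zero fun j hj => by
      rw [hyV i hi, hyV j hj]; simp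
  have e4 : ∑ i ∈ Vᶜ, ∑ j ∈ Vᶜ, ‖y i - y j‖ = ∑ i ∈ Vᶜ, ∑ j ∈ Vᶜ, ‖x i - x j‖ :=
    Finset.sum_congr rfl fun i hi => Finset.sum_congr rfl fun j hj => by
      rw [hyC i hi, hyC j hj]
  have e5 : ∑ j ∈ Vᶜ, ∑ i ∈ V, ‖y i - y j‖ ≤ ∑ j ∈ Vᶜ, ∑ i ∈ V, ‖x i - x j‖ := by
    refine Finset.sum_le_sum fun j hj => ?_
    have : ∑ i ∈ V, ‖y i - y j‖ = ‖∑ i ∈ V, (x i - x j)‖ := by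
      rw [Finset.sum_congr rfl (fun i hi => by rw [hyV i hi, hyC j hj] :
        ∀ i ∈ V, ‖y i - y j‖ = ‖c - x j‖)]
      rw [Finset.sum_sub_distrib, ← hc, Finset.sum_const, Finset.sum_const, nsmul_eq_mul,
        ← Nat.cast_smul_eq_nsmul ℝ, ← smul_sub, norm_smul]
      simp
    rw [this]
    exact norm_sum_le _ _
  have q := quad_identity V x a c hc
  have q2 : ∑ i ∈ V, ∑ j ∈ V, inner ℝ (x i - x j) (a i - a j)
      ≤ (lam * V.card) * ∑ i ∈ V, ∑ j ∈ V, ‖x i - x j‖ := by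
    rw [Finset.mul_sum]
    refine Finset.sum_le_sum fun i hi => ?_
    rw [Finset.mul_sum]
    refine Finset.sum_le_sum fun j hj => ?_
    calc inner ℝ (x i - x j) (a i - a j) ≤ ‖x i - x j‖ * ‖a i - a j‖ := real_inner_le_norm _ _
      _ ≤ ‖x i - x j‖ * (lam * V.card) := by
        gcongr; exact (hD i hi j hj).trans hlam
      _ = _ := mul_comm _ _
  have q3 : -(lam * ∑ i ∈ V, ∑ j ∈ V, ‖x i - x j‖) ≤
      ∑ i ∈ V, ‖x i - a i‖ ^ 2 - ∑ i ∈ V, ‖c - a i‖ ^ 2 - ∑ i ∈ V, ‖x i - c‖ ^ 2 := by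
    refine le_of_mul_le_mul_left ?_ hN
    rw [q]; linarith
  rw [e1, e2, e3, e4] at key
  have e6 := mul_le_mul_of_nonneg_left e5 hl
  have fin : ∑ i ∈ V, ‖x i - c‖ ^ 2 ≤ 0 := by nlinarith
  have hz := (Finset.sum_eq_zero_iff_of_nonneg (fun i _ => by positivity)).mp
    (le_antisymm fin (Finset.sum_nonneg fun i _ => by positivity))
  have hzz : ∀ k ∈ V, x k = c := fun k hk => by
    have := hz k hk
    rwa [sq_eq_zero_iff, norm_eq_zero, sub_eq_zero] at this
  rw [hzz i hi, hzz j hj]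

lemma sphericalGaussian_ball (d : ℕ) (μ : EuclideanSpace ℝ (Fin d)) (σ θ : ℝ) (hσ : 0 < σ)
    (hθ : 0 < θ) :
    sphericalGaussian d μ σ {z | ‖z - μ‖ ≤ θ * σ} = chiSquaredMeasure d (Set.Iic (θ ^ 2)) := by
  have hB : MeasurableSet {z : EuclideanSpace ℝ (Fin d) | ‖z - μ‖ ≤ θ * σ} :=
    measurableSet_le (by fun_prop) (by fun_prop)
  have h1 : ∀ i : Fin d, gaussianReal (μ i) (Real.toNNReal (σ ^ 2))
      = (gaussianReal 0 1).map (fun t => σ * t + μ i) := by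
    intro i
    have : (fun t : ℝ => σ * t + μ i) = (fun t => t + μ i) ∘ (fun t => σ * t) := rfl
    rw [this, ← Measure.map_map (by fun_prop) (by fun_prop), gaussianReal_map_const_mul,
      gaussianReal_map_add_const]
    congr 1
    · simp
    · ext; simp [sq_nonneg]
  unfold sphericalGaussian chiSquaredMeasure
  simp_rw [h1]
  haveI : ∀ i : Fin d, SigmaFinite ((gaussianReal 0 1).map (fun t => σ * t + μ i)) := by
    intro i; rw [← h1]; infer_instance
  rw [← Measure.pi_map_pi (fun i => by fun_prop),
    Measure.map_apply (MeasurableEquiv.measurable _) hB,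
    Measure.map_apply (by fun_prop) ((MeasurableEquiv.measurable _) hB),
    Measure.map_apply (by fun_prop) measurableSet_Iic]
  congr 1
  ext y
  simp only [Set.mem_preimage, Set.mem_setOf_eq, Set.mem_Iic]
  rw [← sq_le_sq₀ (norm_nonneg _) (by positivity), EuclideanSpace.norm_sq_eq]
  simp [mul_pow, ← Finset.mul_sum]
  rw [mul_comm]
  exact mul_le_mul_iff_left₀ (by positivity)

instance sphericalGaussian_prob (d : ℕ) (μ : EuclideanSpace ℝ (Fin d)) (σ : ℝ) :
    IsProbabilityMeasure (sphericalGaussian d μ σ) := by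
  unfold sphericalGaussian
  exact Measure.isProbabilityMeasure_map (MeasurableEquiv.measurable _).aemeasurable

lemma gaussianMixture_prob (d K : ℕ) (μ : Fin K → EuclideanSpace ℝ (Fin d)) (σ : Fin K → ℝ)
    (w : Fin K → ℝ) (hw : ∀ k, 0 < w k) (hwsum : ∑ k, w k = 1) :
    IsProbabilityMeasure (gaussianMixture d K μ σ w) := by
  constructor
  unfold gaussianMixture
  simp only [Measure.coe_finset_sum, Finset.sum_apply, Measure.smul_apply, measure_univ,
    smul_eq_mul, mul_one]
  rw [← ENNReal.ofReal_sum_of_nonneg (fun i _ => (hw i).le), hwsum, ENNReal.ofReal_one]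

lemma gaussianMixture_ball (d K : ℕ) (μ : Fin K → EuclideanSpace ℝ (Fin d)) (σ : Fin K → ℝ)
    (hσ : ∀ k, 0 < σ k) (w : Fin K → ℝ) (hw : ∀ k, 0 < w k) (hwsum : ∑ k, w k = 1)
    (θ : ℝ) (hθ : 0 < θ) (m : Fin K) :
    chiSquaredCDF θ d * w m ≤ (gaussianMixture d K μ σ w).real {z | ‖z - μ m‖ ≤ θ * σ m} := by
  haveI := gaussianMixture_prob d K μ σ w hw hwsum
  have h : ENNReal.ofReal (w m) * sphericalGaussian d (μ m) (σ m) {z | ‖z - μ m‖ ≤ θ * σ m}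
      ≤ gaussianMixture d K μ σ w {z | ‖z - μ m‖ ≤ θ * σ m} := by
    unfold gaussianMixture
    simp only [Measure.coe_finset_sum, Finset.sum_apply, Measure.smul_apply, smul_eq_mul]
    exact Finset.single_le_sum (f := fun k => ENNReal.ofReal (w k) *
      sphericalGaussian d (μ k) (σ k) {z | ‖z - μ m‖ ≤ θ * σ m}) (fun _ _ => zero_le)
      (Finset.mem_univ m)
  have h2 := ENNReal.toReal_mono (measure_ne_top _ _) h
  rw [ENNReal.toReal_mul, ENNReal.toReal_ofReal (hw m).le,
    sphericalGaussian_ball d _ _ _ (hσ m) hθ] at h2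
  rw [mul_comm]
  exact h2

lemma hoeffding_count {Ω : Type*} [MeasurableSpace Ω] (P : Measure Ω) [IsProbabilityMeasure P]
    (B : Set Ω) (hB : MeasurableSet B) (n : ℕ) (hn : 0 < n) (ε : ℝ) (hε : 0 < ε) :
    (Measure.pi fun _ : Fin n => P).real
      {a | n * ε ≤ ∑ i, (P.real B - B.indicator (fun _ => (1 : ℝ)) (a i))}
      ≤ Real.exp (-(2 * ε ^ 2) * n) := by
  have hn' : (0 : ℝ) < n := by exact_mod_cast hn
  let f : Ω → ℝ := fun z => P.real B - B.indicator (fun _ => (1 : ℝ)) z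
  have hf : Measurable f := measurable_const.sub (measurable_const.indicator hB)
  have hind : iIndepFun (fun (i : Fin n) (a : Fin n → Ω) => f (a i))
      (Measure.pi fun _ : Fin n => P) := iIndepFun_pi (fun i => hf.aemeasurable)
  have hint : ∫ z, f z ∂P = 0 := by
    simp only [f]
    rw [integral_sub (integrable_const _) ((integrable_const _).indicator hB),
      integral_indicator hB]
    simp
  have hsub : ∀ i ∈ (Finset.univ : Finset (Fin n)),
      HasSubgaussianMGF (fun a : Fin n → Ω => f (a i))
      ((‖P.real B - (P.real B - 1)‖₊ / 2) ^ 2) (Measure.pi fun _ : Fin n => P) := by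
    intro i _
    refine hasSubgaussianMGF_of_mem_Icc_of_integral_eq_zero
      (hf.comp (measurable_pi_apply i)).aemeasurable ?_ ?_
    · refine Filter.Eventually.of_forall fun a => ?_
      by_cases h : a i ∈ B <;> simp [f, h]
    · have := (measurePreserving_eval (fun _ : Fin n => P) i)
      have h2 := integral_map (μ := Measure.pi fun _ : Fin n => P) this.measurable.aemeasurable
        (f := f) hf.aestronglyMeasurable
      rw [this.map_eq, hint] at h2
      exact h2.symm
  have := HasSubgaussianMGF.measure_sum_ge_le_of_iIndepFun hind hsub (ε := n * ε) (by positivity)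
  refine this.trans (le_of_eq ?_)
  congr 1
  simp
  field_simp

/-- Recovery of one Gaussian component: for `n` i.i.d. samples from the mixture and
`λ ≥ 2θσ_m/((F(θ,d)w_m − ε)n)`, with probability at least `1 − C·e^{−c·n}` all sample
points within `θσ_m` of `μ_m` are assigned to the same cluster by sum-of-norms
clustering. -/
theorem recovery_of_one_component
    (d K : ℕ) (μ : Fin K → EuclideanSpace ℝ (Fin d)) (σ : Fin K → ℝ) (hσ : ∀ k, 0 < σ k)
    (w : Fin K → ℝ) (hw : ∀ k, 0 < w k) (hwsum : ∑ k, w k = 1)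
    (θ : ℝ) (hθ : 0 < θ) (m : Fin K) (ε : ℝ) (hε : 0 < ε)
    (hεlt : ε < chiSquaredCDF θ d * w m)
    (lam : ℕ → ℝ)
    (hlam : ∀ n : ℕ, 2 * θ * σ m / ((chiSquaredCDF θ d * w m - ε) * n) ≤ lam n) :
    ∃ c : ℝ, 0 < c ∧ ∃ C : ℝ, ∀ n : ℕ,
      ENNReal.ofReal (1 - C * Real.exp (-c * n)) ≤
        (Measure.pi fun _ : Fin n => gaussianMixture d K μ σ w)
          {a | ∀ x : Fin n → EuclideanSpace ℝ (Fin d),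
            (∀ y : Fin n → EuclideanSpace ℝ (Fin d),
              sonObjective a (lam n) x ≤ sonObjective a (lam n) y) →
            ∀ i i' : Fin n,
              ‖a i - μ m‖ ≤ θ * σ m → ‖a i' - μ m‖ ≤ θ * σ m → x i = x i'} := by
  refine ⟨2 * ε ^ 2, by positivity, 1, fun n => ?_⟩
  haveI := gaussianMixture_prob d K μ σ w hw hwsum
  rcases Nat.eq_zero_or_pos n with rfl | hn
  · simp
  have hn' : (0 : ℝ) < n := by exact_mod_cast hn
  set P := gaussianMixture d K μ σ w with hP
  set B : Set (EuclideanSpace ℝ (Fin d)) := {z | ‖z - μ m‖ ≤ θ * σ m} with hBdef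
  have hB : MeasurableSet B := measurableSet_le (by fun_prop) (by fun_prop)
  have hq : chiSquaredCDF θ d * w m ≤ P.real B :=
    gaussianMixture_ball d K μ σ hσ w hw hwsum θ hθ m
  set S : Set (Fin n → EuclideanSpace ℝ (Fin d)) :=
    {a | n * ε ≤ ∑ i, (P.real B - B.indicator (fun _ => (1 : ℝ)) (a i))} with hS
  have hSm : MeasurableSet S := by
    refine measurableSet_le measurable_const (Finset.measurable_sum _ fun i _ => ?_)
    exact measurable_const.sub ((measurable_const.indicator hB).comp (measurable_pi_apply i))
  have hSle : (Measure.pi fun _ : Fin n => P).real S ≤ Real.exp (-(2 * ε ^ 2) * n) :=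
    hoeffding_count P B hB n hn ε hε
  have hc : ENNReal.ofReal (1 - 1 * Real.exp (-(2 * ε ^ 2) * n))
      ≤ (Measure.pi fun _ : Fin n => P) Sᶜ := by
    rw [← ofReal_measureReal, probReal_compl_eq_one_sub hSm]
    exact ENNReal.ofReal_le_ofReal (by linarith)
  refine hc.trans (measure_mono ?_)
  intro a ha x hx i i' hi hi'
  classical
  let V : Finset (Fin n) := Finset.univ.filter fun i => ‖a i - μ m‖ ≤ θ * σ m
  have hp : 0 < chiSquaredCDF θ d * w m - ε := by linarith
  have hcard : (chiSquaredCDF θ d * w m - ε) * n ≤ V.card := by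
    have h1 : ∑ i, B.indicator (fun _ => (1 : ℝ)) (a i) = V.card := by
      simp [V, Set.indicator_apply, hBdef]
    have h2 : ¬ (n * ε ≤ ∑ i, (P.real B - B.indicator (fun _ => (1 : ℝ)) (a i))) := ha
    rw [Finset.sum_sub_distrib, h1] at h2
    simp only [Finset.sum_const, Finset.card_univ, Fintype.card_fin, nsmul_eq_mul] at h2
    nlinarith
  have hpn := mul_pos hp hn'
  have hR : 0 ≤ 2 * θ * σ m := by have := hσ m; positivity
  have hl : 0 ≤ lam n := le_trans (by positivity) (hlam n)
  refine det_recovery a x (lam n) hl V (2 * θ * σ m) ?_ ?_ hx i (by simp [V, hi]) i'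
    (by simp [V, hi'])
  · intro i hi j hj
    have h1 : ‖a i - μ m‖ ≤ θ * σ m := by simpa [V] using hi
    have h2 : ‖a j - μ m‖ ≤ θ * σ m := by simpa [V] using hj
    calc ‖a i - a j‖ = ‖(a i - μ m) - (a j - μ m)‖ := by congr 1; abel
      _ ≤ _ := norm_sub_le _ _
      _ ≤ _ := by linarith
  · have := (div_le_iff₀ hpn).mp (hlam n)
    exact this.trans (mul_le_mul_of_nonneg_left hcard hl)
end

section
/- (Distinctness of two components' clusters.) Fix means μ_1,…,μ_K ∈ ℝ^d, standard deviations σ_1,…,σ_K > 0, weights w_1,…,w_K > 0 summing to 1, θ > 0, and distinct indices m ≠ m′ with μ_m ≠ μ_{m′}. For each n ≥ 2, let a_1,…,a_n be i.i.d. samples from the mixture Σ_{k=1}^K w_k·N(μ_k, σ_k²·I_d), let V_m = {i : ‖a_i − μ_m‖ ≤ θσ_m} and V_{m′} = {i : ‖a_i − μ_{m′}‖ ≤ θσ_{m′}}, let λ = λ(n) satisfy 0 ≤ λ < ‖μ_m − μ_{m′}‖/(2(n − 1)), and let x* be the minimizer of the sum-of-norms clustering objective with parameter λ. Then there exist constants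 c > 0 and C such that for every n, with probability at least 1 − C·e^{−c·n}, there exist indices i ∈ V_m and i′ ∈ V_{m′} with x_i* ≠ x_{i′}*; consequently V_m and V_{m′} are not contained in a common cluster. -/
open MeasureTheory ProbabilityTheory Finset

lemma pair_sum_update_le {d n : ℕ} (x : Fin n → EuclideanSpace ℝ (Fin d)) (k : Fin n)
    (v : EuclideanSpace ℝ (Fin d)) :
    (∑ i, ∑ j, if i < j then ‖Function.update x k (x k + v) i
        - Function.update x k (x k + v) j‖ else 0)
      ≤ (∑ i, ∑ j, if i < j then ‖x i - x j‖ else 0) + ((n : ℝ) - 1) * ‖v‖ := by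
  have hcount : (∑ i : Fin n, ∑ j : Fin n, if i < j then
      ((if i = k then ‖v‖ else 0) + (if j = k then ‖v‖ else 0)) else 0)
      = ((n : ℝ) - 1) * ‖v‖ := by
    have h1 : ∀ i j : Fin n, (if i < j then
      ((if i = k then ‖v‖ else 0) + (if j = k then ‖v‖ else 0)) else 0)
      = (if i = k then (if k < j then ‖v‖ else 0) else 0)
        + (if j = k then (if i < k then ‖v‖ else 0) else 0) := by
      intro i j
      by_cases h : i < j <;> by_cases h2 : i = k <;> by_cases h3 : j = k <;>
        simp_all
    simp_rw [h1, Finset.sum_add_distrib]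
    have h2 : (∑ i : Fin n, ∑ j : Fin n, if i = k then (if k < j then ‖v‖ else 0) else 0)
        = ((n : ℝ) - 1 - k) * ‖v‖ := by
      rw [Finset.sum_eq_single k]
      · simp only [if_true]
        rw [← Finset.sum_filter, Finset.sum_const, nsmul_eq_mul]
        congr 1
        have : (Finset.univ.filter (fun j => k < j)) = Finset.Ioi k := by ext; simp
        rw [this, Fin.card_Ioi]
        have := k.2
        rw [Nat.cast_sub (by omega), Nat.cast_sub (by omega)]
        simp
      · intro b _ hb
        simp [hb]
      · simp
    have h3 : (∑ i : Fin n, ∑ j : Fin n, if j = k then (if i < k then ‖v‖ else 0) else 0)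
        = (k : ℝ) * ‖v‖ := by
      simp only [Finset.sum_ite_eq', Finset.mem_univ, if_true]
      rw [← Finset.sum_filter, Finset.sum_const, nsmul_eq_mul]
      congr 1
      have : (Finset.univ.filter (fun j => j < k)) = Finset.Iio k := by ext; simp
      rw [this, Fin.card_Iio]
    rw [h2, h3]; ring
  rw [← hcount, ← Finset.sum_add_distrib]
  refine Finset.sum_le_sum fun i _ => ?_
  rw [← Finset.sum_add_distrib]
  refine Finset.sum_le_sum fun j _ => ?_
  by_cases h : i < j
  · simp only [h, if_true]
    by_cases h2 : i = k
    · have h3 : j ≠ k := fun e => by simp [h2, e] at h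
      subst h2
      simp only [Function.update_self, Function.update_of_ne h3, if_true, h3, if_false, add_zero]
      calc ‖x i + v - x j‖ = ‖(x i - x j) + v‖ := by congr 1; abel
        _ ≤ _ := norm_add_le _ _
    · by_cases h3 : j = k
      · subst h3
        simp only [Function.update_self, Function.update_of_ne h2, if_true, h2, if_false, zero_add]
        calc ‖x i - (x j + v)‖ = ‖(x i - x j) - v‖ := by congr 1; abel
          _ ≤ _ := norm_sub_le _ _
      · simp [h2, h3]
  · simp [h]

lemma minimizer_dist_le {d n : ℕ} (a x : Fin n → EuclideanSpace ℝ (Fin d)) (lam : ℝ)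
    (hl : 0 ≤ lam) (hx : ∀ y, sonObjective a lam x ≤ sonObjective a lam y) (k : Fin n) :
    ‖x k - a k‖ ≤ lam * ((n : ℝ) - 1) := by
  have key : ∀ t : ℝ, 0 < t → t ≤ 1 →
      (1 - t / 2) * ‖x k - a k‖ ^ 2 ≤ lam * ((n : ℝ) - 1) * ‖x k - a k‖ := by
    intro t ht ht1
    have h := hx (Function.update x k (x k + t • (a k - x k)))
    have hp := pair_sum_update_le x k (t • (a k - x k))
    have hp' := mul_le_mul_of_nonneg_left hp hl
    have hq : (∑ i, ‖Function.update x k (x k + t • (a k - x k)) i - a i‖ ^ 2)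
        = (∑ i, ‖x i - a i‖ ^ 2) + ((1 - t) ^ 2 - 1) * ‖x k - a k‖ ^ 2 := by
      rw [← Finset.add_sum_erase _ _ (Finset.mem_univ k),
        ← Finset.add_sum_erase _ (fun i => ‖x i - a i‖ ^ 2) (Finset.mem_univ k)]
      have e1 : ∑ i ∈ Finset.univ.erase k,
          ‖Function.update x k (x k + t • (a k - x k)) i - a i‖ ^ 2
          = ∑ i ∈ Finset.univ.erase k, ‖x i - a i‖ ^ 2 := by
        refine Finset.sum_congr rfl fun i hi => ?_
        rw [Function.update_of_ne (Finset.ne_of_mem_erase hi)]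
      rw [e1, Function.update_self]
      have e2 : x k + t • (a k - x k) - a k = (1 - t) • (x k - a k) := by
        module
      rw [e2, norm_smul, mul_pow, Real.norm_eq_abs, sq_abs]
      ring
    rw [norm_smul, Real.norm_eq_abs, abs_of_pos ht, norm_sub_rev] at hp'
    unfold sonObjective at h
    rw [hq] at h
    have h5 : t * ((1 - t / 2) * ‖x k - a k‖ ^ 2) ≤
        t * (lam * ((n : ℝ) - 1) * ‖x k - a k‖) := by
      nlinarith
    exact le_of_mul_le_mul_left h5 ht
  have hn : (1 : ℝ) ≤ n := by
    have := k.2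
    exact_mod_cast (by omega : 1 ≤ n)
  have hN : 0 ≤ lam * ((n : ℝ) - 1) := mul_nonneg hl (by linarith)
  by_contra! hlt
  set N := ‖x k - a k‖
  set L := lam * ((n : ℝ) - 1)
  have hNpos : 0 < N := lt_of_le_of_lt hN hlt
  have h1 := key ((N - L) / N) (div_pos (by linarith) hNpos)
    (by rw [div_le_one hNpos]; linarith)
  have h2 : (1 - (N - L) / N / 2) * N ^ 2 = N * (N - (N - L) / 2) := by
    field_simp
  rw [h2] at h1
  nlinarith

lemma sphericalGaussian_pos (d : ℕ) (μ : EuclideanSpace ℝ (Fin d)) (σ : ℝ) (hσ : 0 < σ)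
    (U : Set (EuclideanSpace ℝ (Fin d))) (hU : IsOpen U) (hne : U.Nonempty) :
    0 < sphericalGaussian d μ σ U := by
  have hv : Real.toNNReal (σ ^ 2) ≠ 0 := by
    have : 0 < σ ^ 2 := by positivity
    simpa using this.ne'
  have hpos : ∀ i, (gaussianReal (μ i) (Real.toNNReal (σ ^ 2))).IsOpenPosMeasure := fun i =>
    (gaussianReal_absolutelyContinuous' (μ i) hv).isOpenPosMeasure
  unfold sphericalGaussian
  rw [Measure.map_apply (MeasurableEquiv.measurable _) hU.measurableSet]
  refine IsOpen.measure_pos _ ?_ ?_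
  · exact hU.preimage (PiLp.continuous_toLp 2 _)
  · obtain ⟨u, hu⟩ := hne
    exact ⟨u.ofLp, by simpa using hu⟩

lemma gaussianMixture_pos (d K : ℕ) (μ : Fin K → EuclideanSpace ℝ (Fin d)) (σ : Fin K → ℝ)
    (hσ : ∀ k, 0 < σ k) (w : Fin K → ℝ) (hw : ∀ k, 0 < w k) (m : Fin K)
    (U : Set (EuclideanSpace ℝ (Fin d))) (hU : IsOpen U) (hne : U.Nonempty) :
    0 < gaussianMixture d K μ σ w U := by
  unfold gaussianMixture
  simp only [Measure.coe_finset_sum, Finset.sum_apply, Measure.smul_apply, smul_eq_mul]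
  refine lt_of_lt_of_le ?_ (Finset.single_le_sum (f := fun k => ENNReal.ofReal (w k) *
    sphericalGaussian d (μ k) (σ k) U) (fun _ _ => zero_le) (Finset.mem_univ m))
  exact ENNReal.mul_pos (by simpa using hw m) (sphericalGaussian_pos d _ _ (hσ m) U hU hne).ne'

lemma pi_miss_le {E : Type*} [MeasurableSpace E] (P : Measure E) [IsProbabilityMeasure P]
    (U : Set E) (hU : MeasurableSet U) (n : ℕ) (c : ℝ) (hc : c ≤ P.real U) :
    (Measure.pi fun _ : Fin n => P) {a | ∀ i, a i ∉ U} ≤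
      ENNReal.ofReal (Real.exp (-c * n)) := by
  have hs : {a : Fin n → E | ∀ i, a i ∉ U} = Set.univ.pi (fun _ => Uᶜ) := by
    ext; simp
  rw [hs, Measure.pi_pi, Finset.prod_const, Finset.card_univ, Fintype.card_fin,
    ← ofReal_measureReal, ← ENNReal.ofReal_pow measureReal_nonneg]
  refine ENNReal.ofReal_le_ofReal ?_
  rw [mul_comm, Real.exp_nat_mul]
  refine pow_le_pow_left₀ measureReal_nonneg ?_ n
  rw [probReal_compl_eq_one_sub hU]
  have := Real.add_one_le_exp (-c)
  linarith

lemma ball_facts {d : ℕ} (p u a : EuclideanSpace ℝ (Fin d)) (r : ℝ) (hr : 0 < r)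
    (hu : ‖u‖ = 1) (ha : a ∈ Metric.ball (p + r • u) r) :
    ‖a - p‖ ≤ 2 * r ∧ 0 ≤ inner ℝ (a - p) u := by
  rw [mem_ball_iff_norm] at ha
  have e : a - p = (a - (p + r • u)) + r • u := by abel
  have hru : ‖r • u‖ = r := by rw [norm_smul, hu, Real.norm_eq_abs, abs_of_pos hr, mul_one]
  constructor
  · rw [e]
    refine (norm_add_le _ _).trans ?_
    linarith
  · rw [e, inner_add_left, inner_smul_left, real_inner_self_eq_norm_sq, hu]
    have := abs_real_inner_le_norm (a - (p + r • u)) u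
    rw [hu, mul_one] at this
    have := (abs_le.1 this).1
    simp only [conj_trivial]
    linarith

/-- Distinctness of two components' clusters: if
`0 ≤ λ < ‖μ_m − μ_{m′}‖/(2(n − 1))`, then with probability at least `1 − C·e^{−c·n}`
there are samples `i ∈ V_m` and `i′ ∈ V_{m′}` assigned to different clusters, so `V_m`
and `V_{m′}` are not contained in a common cluster. -/
theorem distinctness_of_two_components
    (d K : ℕ) (μ : Fin K → EuclideanSpace ℝ (Fin d)) (σ : Fin K → ℝ) (hσ : ∀ k, 0 < σ k)
    (w : Fin K → ℝ) (hw : ∀ k, 0 < w k) (hwsum : ∑ k, w k = 1)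
    (θ : ℝ) (hθ : 0 < θ) (m m' : Fin K) (hmm' : m ≠ m') (hμ : μ m ≠ μ m')
    (lam : ℕ → ℝ)
    (hlam : ∀ n : ℕ, 2 ≤ n →
      0 ≤ lam n ∧ lam n < ‖μ m - μ m'‖ / (2 * ((n : ℝ) - 1))) :
    ∃ c : ℝ, 0 < c ∧ ∃ C : ℝ, ∀ n : ℕ, 2 ≤ n →
      ENNReal.ofReal (1 - C * Real.exp (-c * n)) ≤
        (Measure.pi fun _ : Fin n => gaussianMixture d K μ σ w)
          {a | ∀ x : Fin n → EuclideanSpace ℝ (Fin d),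
            (∀ y : Fin n → EuclideanSpace ℝ (Fin d),
              sonObjective a (lam n) x ≤ sonObjective a (lam n) y) →
            ∃ i i' : Fin n, ‖a i - μ m‖ ≤ θ * σ m ∧ ‖a i' - μ m'‖ ≤ θ * σ m' ∧
              x i ≠ x i'} := by
  haveI := gaussianMixture_prob d K μ σ w hw hwsum
  set P := gaussianMixture d K μ σ w with hP
  have hD : 0 < ‖μ m - μ m'‖ := norm_pos_iff.2 (sub_ne_zero.2 hμ)
  set D := ‖μ m - μ m'‖ with hDdef
  set u : EuclideanSpace ℝ (Fin d) := D⁻¹ • (μ m - μ m') with hu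
  have hun : ‖u‖ = 1 := by
    rw [hu, norm_smul, norm_inv, Real.norm_eq_abs, abs_of_pos hD, ← hDdef,
      inv_mul_cancel₀ hD.ne']
  have hr : 0 < θ * σ m / 2 := by have := hσ m; positivity
  have hr' : 0 < θ * σ m' / 2 := by have := hσ m'; positivity
  set U := Metric.ball (μ m + (θ * σ m / 2) • u) (θ * σ m / 2) with hU
  set U' := Metric.ball (μ m' + (θ * σ m' / 2) • (-u)) (θ * σ m' / 2) with hU'
  have hp : 0 < P.real U := ENNReal.toReal_pos
    (gaussianMixture_pos d K μ σ hσ w hw m U Metric.isOpen_ball (Metric.nonempty_ball.2 hr)).ne'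
    (measure_ne_top _ _)
  have hp' : 0 < P.real U' := ENNReal.toReal_pos
    (gaussianMixture_pos d K μ σ hσ w hw m U' Metric.isOpen_ball (Metric.nonempty_ball.2 hr')).ne'
    (measure_ne_top _ _)
  refine ⟨min (P.real U) (P.real U'), lt_min hp hp', 2, fun n hn => ?_⟩
  set c := min (P.real U) (P.real U') with hc
  obtain ⟨hl0, hl1⟩ := hlam n hn
  have h1 := pi_miss_le P U Metric.isOpen_ball.measurableSet n c (min_le_left _ _)
  have h2 := pi_miss_le P U' Metric.isOpen_ball.measurableSet n c (min_le_right _ _)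
  set Q := Measure.pi fun _ : Fin n => P with hQ
  have hmeas : ∀ W : Set (EuclideanSpace ℝ (Fin d)), MeasurableSet W →
      MeasurableSet {a : Fin n → EuclideanSpace ℝ (Fin d) | ∀ i, a i ∉ W} := by
    intro W hW
    have hs : {a : Fin n → EuclideanSpace ℝ (Fin d) | ∀ i, a i ∉ W}
        = Set.univ.pi (fun _ => Wᶜ) := by
      ext; simp
    rw [hs]
    exact MeasurableSet.univ_pi fun _ => hW.compl
  set B := {a : Fin n → EuclideanSpace ℝ (Fin d) | ∀ i, a i ∉ U} ∪
    {a : Fin n → EuclideanSpace ℝ (Fin d) | ∀ i, a i ∉ U'} with hB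
  have hBm : MeasurableSet B :=
    (hmeas U Metric.isOpen_ball.measurableSet).union (hmeas U' Metric.isOpen_ball.measurableSet)
  have hBle : Q B ≤ ENNReal.ofReal (2 * Real.exp (-c * n)) := by
    refine (measure_union_le _ _).trans ((add_le_add h1 h2).trans ?_)
    rw [← ENNReal.ofReal_add (Real.exp_pos _).le (Real.exp_pos _).le, two_mul]
  have hgood : ENNReal.ofReal (1 - 2 * Real.exp (-c * n)) ≤ Q Bᶜ := by
    rw [prob_compl_eq_one_sub hBm, ENNReal.ofReal_sub _ (by positivity), ENNReal.ofReal_one]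
    exact tsub_le_tsub_left hBle _
  refine hgood.trans (measure_mono ?_)
  intro a ha x hx
  simp only [hB, Set.mem_compl_iff, Set.mem_union, Set.mem_setOf_eq, not_or, not_forall,
    not_not] at ha
  obtain ⟨⟨i, hi⟩, ⟨i', hi'⟩⟩ := ha
  obtain ⟨f1, f2⟩ := ball_facts _ _ _ _ hr hun hi
  obtain ⟨g1, g2⟩ := ball_facts _ _ _ _ hr' (by rw [norm_neg, hun]) hi'
  refine ⟨i, i', by linarith, by linarith, fun hxe => ?_⟩
  have k1 := minimizer_dist_le a x (lam n) hl0 hx i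
  have k2 := minimizer_dist_le a x (lam n) hl0 hx i'
  rw [← hxe] at k2
  have hn1 : (0 : ℝ) < (n : ℝ) - 1 := by
    have : (2 : ℝ) ≤ n := by exact_mod_cast hn
    linarith
  rw [lt_div_iff₀ (by positivity)] at hl1
  have hdist : ‖a i - a i'‖ ≤ ‖x i - a i‖ + ‖x i - a i'‖ := by
    have e : a i - a i' = (x i - a i') - (x i - a i) := by abel
    rw [e, add_comm]
    exact norm_sub_le _ _
  have hin : inner ℝ (a i - a i') u ≤ ‖a i - a i'‖ := by
    have := real_inner_le_norm (a i - a i') u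
    rwa [hun, mul_one] at this
  have hDu : inner ℝ (μ m - μ m') u = D := by
    rw [hu, inner_smul_right, real_inner_self_eq_norm_sq, ← hDdef]
    field_simp
  have e2 : a i - a i' = (a i - μ m) - (a i' - μ m') + (μ m - μ m') := by abel
  have hbig : D ≤ inner ℝ (a i - a i') u := by
    rw [e2, inner_add_left, inner_sub_left, hDu]
    rw [inner_neg_right] at g2
    linarith
  nlinarith
end
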